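/- Assume p > n (for instance p = n + 1) and 𝒞 is compact with R = sup{Tr(X) : X ∈ 𝒞} < ∞. Let Y ∈ ℳ, μ ∈ ℝ^m and S = C − 𝒜*(μ). If ε_g, ε_H ≥ 0 are such that ‖2 S Y‖ ≤ ε_g and 2⟨Ẏ, S Ẏ⟩ ≥ −ε_H ‖Ẏ‖² for all Ẏ ∈ T_Yℳ, then Y is approximately optimal: 0 ≤ 2(Tr(C Y Yᵀ) − f*) ≤ √R ε_g + R ε_H. -/

import Mathlib

open Matrix MeasureTheory

noncomputable section

/-- Frobenius inner product `⟨A, B⟩ = Tr(Aᵀ B)`. -/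
def frobInner {n p : ℕ} (A B : Matrix (Fin n) (Fin p) ℝ) : ℝ := (Aᵀ * B).trace

/-- Frobenius norm. -/
def frobNorm {n p : ℕ} (A : Matrix (Fin n) (Fin p) ℝ) : ℝ := Real.sqrt (frobInner A A)

/-- The constraint map 𝒜, `𝒜(X) i = Tr(A i * X)`. -/
def Aop {n m : ℕ} (A : Fin m → Matrix (Fin n) (Fin n) ℝ) (X : Matrix (Fin n) (Fin n) ℝ) :
    Fin m → ℝ := fun i => (A i * X).trace

/-- The adjoint 𝒜*, `𝒜*(μ) = ∑ i, μ i • A i`. -/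
def Aadj {n m : ℕ} (A : Fin m → Matrix (Fin n) (Fin n) ℝ) (μ : Fin m → ℝ) :
    Matrix (Fin n) (Fin n) ℝ := ∑ i, μ i • A i

/-- The SDP feasible set 𝒞. -/
def sdpFeas {n m : ℕ} (A : Fin m → Matrix (Fin n) (Fin n) ℝ) (b : Fin m → ℝ) :
    Set (Matrix (Fin n) (Fin n) ℝ) := {X | X.IsSymm ∧ Aop A X = b ∧ X.PosSemidef}

/-- Optimal value `f* = inf {Tr(C X) : X ∈ 𝒞}` of the SDP. -/
def fstar {n m : ℕ} (A : Fin m → Matrix (Fin n) (Fin n) ℝ) (b : Fin m → ℝ)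
    (C : Matrix (Fin n) (Fin n) ℝ) : ℝ := sInf ((fun X => (C * X).trace) '' sdpFeas A b)

/-- The factorized feasible set `ℳ_p = {Y : 𝒜(Y Yᵀ) = b}`. -/
def facFeas {n m : ℕ} (A : Fin m → Matrix (Fin n) (Fin n) ℝ) (b : Fin m → ℝ) (p : ℕ) :
    Set (Matrix (Fin n) (Fin p) ℝ) := {Y | Aop A (Y * Yᵀ) = b}

/-- Tangent space `T_Yℳ = {Ydot : 𝒜(Ydot Yᵀ + Y Ydotᵀ) = 0}`. -/
def tangentSet {n m p : ℕ} (A : Fin m → Matrix (Fin n) (Fin n) ℝ)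
    (Y : Matrix (Fin n) (Fin p) ℝ) : Set (Matrix (Fin n) (Fin p) ℝ) :=
  {Ydot | Aop A (Ydot * Yᵀ + Y * Ydotᵀ) = 0}

/-- Second-order critical point of the factorized problem. -/
def IsSOCP {n m p : ℕ} (A : Fin m → Matrix (Fin n) (Fin n) ℝ) (b : Fin m → ℝ)
    (C : Matrix (Fin n) (Fin n) ℝ) (Y : Matrix (Fin n) (Fin p) ℝ) : Prop :=
  Y ∈ facFeas A b p ∧ ∃ μ : Fin m → ℝ,
    (C - Aadj A μ) * Y = 0 ∧
    ∀ Ydot ∈ tangentSet A Y, 0 ≤ frobInner Ydot ((C - Aadj A μ) * Ydot)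

/-- The real vector space of symmetric `n × n` matrices. -/
def symmSpace (n : ℕ) : Submodule ℝ (Matrix (Fin n) (Fin n) ℝ) where
  carrier := {X | X.IsSymm}
  add_mem' := fun ha hb => ha.add hb
  zero_mem' := Matrix.isSymm_zero
  smul_mem' := fun c X hX => by
    show (c • X)ᵀ = c • X
    rw [Matrix.transpose_smul, hX]

instance (n : ℕ) : MeasurableSpace ↥(symmSpace n) := borel _

/-- A set of symmetric matrices is null if it has measure zero for every additive Haar
measure on the finite-dimensional real vector space of symmetric `n × n` matrices. -/
def IsNullSymmSet (n : ℕ) (S : Set (Matrix (Fin n) (Fin n) ℝ)) : Prop :=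
  ∀ μ : Measure ↥(symmSpace n), μ.IsAddHaarMeasure →
    μ {C : ↥(symmSpace n) | (C : Matrix (Fin n) (Fin n) ℝ) ∈ S} = 0

/-!
If `Y z = 0` with `z ≠ 0`, every rank-one direction `u zᵀ` is tangent at `Y`: the linearised
constraints only involve `(u zᵀ) Yᵀ = u (Y z)ᵀ = 0` and its transpose. Along these directions the
Hessian condition says that the quadratic form of `S + (ε_H / 2) I` is nonnegative, so
`2 Tr(S X) ≥ -ε_H Tr(X)` for every `X ⪰ 0`. Since `𝒜` takes the same value at `Y Yᵀ` and at
any `X ∈ 𝒞`, replacing `C` by `S` does not change the gap: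
`2 (Tr(C Y Yᵀ) - Tr(C X)) = 2 ⟨Y, S Y⟩ - 2 Tr(S X) ≤ ‖Y‖ ε_g + ε_H Tr(X)`, where the gradient
condition enters through the Cauchy–Schwarz inequality.
-/

section Matrix

variable {ι κ K : Type*} [Fintype κ]

lemma exists_ne_zero_mulVec_eq_zero_of_rank_lt_card [Field K] {M : Matrix ι κ K}
    (h : M.rank < Fintype.card κ) : ∃ z ≠ 0, M *ᵥ z = 0 := by
  by_contra! hker
  have hinj : Function.Injective M.mulVecLin :=
    (injective_iff_map_eq_zero _).2 fun z hz => by_contra fun hz₀ => hker z hz₀ hz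
  exact h.ne (by simpa [Matrix.rank] using LinearMap.finrank_range_of_inj hinj)

variable [Fintype ι]

lemma trace_mul_transpose_mul_self [NonUnitalCommSemiring K] (M : Matrix ι ι K)
    (B : Matrix κ ι K) : (M * (Bᵀ * B)).trace = ∑ i, B i ⬝ᵥ M *ᵥ B i := by
  rw [← Matrix.mul_assoc, trace_mul_comm]
  rfl

lemma mul_trace_le_trace_mul_of_posSemidef {M X : Matrix ι ι ℝ} {c : ℝ}
    (hM : ∀ u, c * (u ⬝ᵥ u) ≤ u ⬝ᵥ M *ᵥ u) (hX : X.PosSemidef) :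
    c * X.trace ≤ (M * X).trace := by
  classical
  obtain ⟨B, rfl⟩ : ∃ B : Matrix ι ι ℝ, X = Bᵀ * B := by
    open scoped MatrixOrder in
    exact CStarAlgebra.nonneg_iff_eq_star_mul_self.1 hX.nonneg
  have htrace : (Bᵀ * B).trace = ∑ i, B i ⬝ᵥ B i := by
    simpa using trace_mul_transpose_mul_self 1 B
  rw [htrace, trace_mul_transpose_mul_self, Finset.mul_sum]
  exact Finset.sum_le_sum fun i _ => hM (B i)

end Matrix

section Frobenius

variable {n p : ℕ}

lemma frobInner_eq_sum (A B : Matrix (Fin n) (Fin p) ℝ) :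
    frobInner A B = ∑ x : Fin p × Fin n, A x.2 x.1 * B x.2 x.1 := by
  simp [frobInner, trace, mul_apply, Fintype.sum_prod_type]

lemma frobNorm_nonneg (A : Matrix (Fin n) (Fin p) ℝ) : 0 ≤ frobNorm A := Real.sqrt_nonneg _

lemma frobNorm_sq (A : Matrix (Fin n) (Fin p) ℝ) : frobNorm A ^ 2 = frobInner A A := by
  refine Real.sq_sqrt ?_
  rw [frobInner_eq_sum]
  exact Finset.sum_nonneg fun x _ => mul_self_nonneg _

lemma frobInner_le_frobNorm_mul_frobNorm (A B : Matrix (Fin n) (Fin p) ℝ) :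
    frobInner A B ≤ frobNorm A * frobNorm B := by
  simp only [frobNorm, frobInner_eq_sum, ← pow_two]
  exact Real.sum_mul_le_sqrt_mul_sqrt _ _ _

lemma frobInner_mul_right (Y : Matrix (Fin n) (Fin p) ℝ) (M : Matrix (Fin n) (Fin n) ℝ) :
    frobInner Y (M * Y) = (M * (Y * Yᵀ)).trace := by
  rw [frobInner, trace_mul_comm, Matrix.mul_assoc]

lemma frobNorm_eq_sqrt_trace (Y : Matrix (Fin n) (Fin p) ℝ) :
    frobNorm Y = √(Y * Yᵀ).trace := by
  rw [frobNorm, frobInner, trace_mul_comm]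

lemma frobInner_vecMulVec (u v : Fin n → ℝ) (w z : Fin p → ℝ) :
    frobInner (vecMulVec u w) (vecMulVec v z) = (u ⬝ᵥ v) * (w ⬝ᵥ z) := by
  rw [frobInner, transpose_vecMulVec, vecMulVec_mul_vecMulVec, trace_vecMulVec, dotProduct_smul,
    smul_eq_mul]

end Frobenius

section FactorizedSDP

variable {n m p : ℕ} {A : Fin m → Matrix (Fin n) (Fin n) ℝ} {b μ : Fin m → ℝ}
  {C S X : Matrix (Fin n) (Fin n) ℝ} {Y : Matrix (Fin n) (Fin p) ℝ} {z : Fin p → ℝ} {εg εH : ℝ}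

lemma trace_Aadj_mul : (Aadj A μ * X).trace = μ ⬝ᵥ Aop A X := by
  simp [Aadj, Aop, dotProduct, Finset.sum_mul, trace_sum]

lemma mul_transpose_mem_sdpFeas (hY : Y ∈ facFeas A b p) : Y * Yᵀ ∈ sdpFeas A b :=
  ⟨by simp [IsSymm], hY, by simpa using posSemidef_self_mul_conjTranspose Y⟩

lemma vecMulVec_mem_tangentSet (hz : Y *ᵥ z = 0) (u : Fin n → ℝ) :
    vecMulVec u z ∈ tangentSet A Y := by
  have hleft : vecMulVec u z * Yᵀ = 0 := by
    rw [vecMulVec_mul, vecMul_transpose, hz, vecMulVec_zero]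
  have hright : Y * (vecMulVec u z)ᵀ = 0 := by
    rw [transpose_vecMulVec, mul_vecMulVec, hz, zero_vecMulVec]
  ext i
  simp only [Aop, hleft, hright, add_zero, Matrix.mul_zero, trace_zero, Pi.zero_apply]

lemma neg_half_mul_dotProduct_self_le_dotProduct_mulVec (hz₀ : z ≠ 0) (hz : Y *ᵥ z = 0)
    (hhess : ∀ Ydot ∈ tangentSet A Y,
      -(εH * frobNorm Ydot ^ 2) ≤ 2 * frobInner Ydot (S * Ydot)) (u : Fin n → ℝ) :
    -(εH / 2) * (u ⬝ᵥ u) ≤ u ⬝ᵥ S *ᵥ u := by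
  have hzz : 0 < z ⬝ᵥ z := dotProduct_star_self_pos_iff.2 hz₀
  have hdir := hhess _ (vecMulVec_mem_tangentSet hz u)
  rw [frobNorm_sq, mul_vecMulVec, frobInner_vecMulVec, frobInner_vecMulVec] at hdir
  refine le_of_mul_le_mul_right ?_ hzz
  linarith

lemma two_mul_trace_sub_trace_le (hY : Y ∈ facFeas A b p) (hrank : Y.rank < p)
    (hS : S = C - Aadj A μ) (hgrad : frobNorm ((2 : ℝ) • (S * Y)) ≤ εg)
    (hhess : ∀ Ydot ∈ tangentSet A Y,
      -(εH * frobNorm Ydot ^ 2) ≤ 2 * frobInner Ydot (S * Ydot))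
    (hX : X ∈ sdpFeas A b) :
    2 * ((C * (Y * Yᵀ)).trace - (C * X).trace) ≤ frobNorm Y * εg + εH * X.trace := by
  obtain ⟨z, hz₀, hz⟩ :=
    exists_ne_zero_mulVec_eq_zero_of_rank_lt_card (hrank.trans_eq (Fintype.card_fin p).symm)
  have hdual : -(εH / 2) * X.trace ≤ (S * X).trace :=
    mul_trace_le_trace_mul_of_posSemidef
      (neg_half_mul_dotProduct_self_le_dotProduct_mulVec hz₀ hz hhess) hX.2.2
  have hprimal : 2 * (S * (Y * Yᵀ)).trace ≤ frobNorm Y * εg := calc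
    2 * (S * (Y * Yᵀ)).trace = frobInner Y ((2 : ℝ) • (S * Y)) := by
      rw [← Matrix.smul_mul, frobInner_mul_right, Matrix.smul_mul, trace_smul, smul_eq_mul]
    _ ≤ frobNorm Y * frobNorm ((2 : ℝ) • (S * Y)) := frobInner_le_frobNorm_mul_frobNorm _ _
    _ ≤ frobNorm Y * εg := mul_le_mul_of_nonneg_left hgrad (frobNorm_nonneg Y)
  have hcost : ∀ Z ∈ sdpFeas A b, (C * Z).trace = (S * Z).trace + μ ⬝ᵥ b := fun Z hZ => by
    rw [hS, Matrix.sub_mul, trace_sub, trace_Aadj_mul, hZ.2.1, sub_add_cancel]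
  rw [hcost _ (mul_transpose_mem_sdpFeas hY), hcost X hX]
  linarith

theorem approx_socp_approx_optimal_of_p_gt_n_general {R : ℝ}
    (hR : R ∈ upperBounds (Matrix.trace '' sdpFeas A b)) (hY : Y ∈ facFeas A b p)
    (hrank : Y.rank < p) (hS : S = C - Aadj A μ) (hεH : 0 ≤ εH)
    (hgrad : frobNorm ((2 : ℝ) • (S * Y)) ≤ εg)
    (hhess : ∀ Ydot ∈ tangentSet A Y,
      -(εH * frobNorm Ydot ^ 2) ≤ 2 * frobInner Ydot (S * Ydot)) :
    0 ≤ 2 * ((C * (Y * Yᵀ)).trace - fstar A b C) ∧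
    2 * ((C * (Y * Yᵀ)).trace - fstar A b C) ≤ √R * εg + R * εH := by
  have hYX := mul_transpose_mem_sdpFeas hY
  have hεg : 0 ≤ εg := (frobNorm_nonneg _).trans hgrad
  have hnorm : frobNorm Y ≤ √R :=
    (frobNorm_eq_sqrt_trace Y).trans_le (Real.sqrt_le_sqrt (hR ⟨_, hYX, rfl⟩))
  have hlower : (C * (Y * Yᵀ)).trace - (√R * εg + R * εH) / 2 ∈
      lowerBounds ((fun X => (C * X).trace) '' sdpFeas A b) := by
    rintro _ ⟨X, hX, rfl⟩
    have hgap := two_mul_trace_sub_trace_le hY hrank hS hgrad hhess hX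
    have hgradTerm : frobNorm Y * εg ≤ √R * εg := mul_le_mul_of_nonneg_right hnorm hεg
    have hhessTerm : εH * X.trace ≤ εH * R := mul_le_mul_of_nonneg_left (hR ⟨X, hX, rfl⟩) hεH
    linarith
  have hstar_le : fstar A b C ≤ (C * (Y * Yᵀ)).trace := csInf_le ⟨_, hlower⟩ ⟨_, hYX, rfl⟩
  have hle_star : (C * (Y * Yᵀ)).trace - (√R * εg + R * εH) / 2 ≤ fstar A b C :=
    le_csInf ⟨_, _, hYX, rfl⟩ hlower
  constructor <;> linarith

end FactorizedSDP

/-- for `p > n`, approximate second-order critical points are approximately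
optimal: `0 ≤ 2(f(Y) − f*) ≤ √R ε_g + R ε_H`. -/
theorem approx_socp_approx_optimal_of_p_gt_n
    (n m p : ℕ) (hn : 0 < n) (hm : 0 < m) (hp : 0 < p) (hpn : n < p)
    (A : Fin m → Matrix (Fin n) (Fin n) ℝ) (hA : ∀ i, (A i).IsSymm) (b : Fin m → ℝ)
    (C : Matrix (Fin n) (Fin n) ℝ) (hC : C.IsSymm)
    (hcompact : IsCompact (sdpFeas A b))
    (R : ℝ) (hR : R = sSup (Matrix.trace '' sdpFeas A b))
    (Y : Matrix (Fin n) (Fin p) ℝ) (hY : Y ∈ facFeas A b p)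
    (μ : Fin m → ℝ) (S : Matrix (Fin n) (Fin n) ℝ) (hS : S = C - Aadj A μ)
    (εg εH : ℝ) (hεg : 0 ≤ εg) (hεH : 0 ≤ εH)
    (hgrad : frobNorm ((2 : ℝ) • (S * Y)) ≤ εg)
    (hhess : ∀ Ydot ∈ tangentSet A Y,
      -(εH * frobNorm Ydot ^ 2) ≤ 2 * frobInner Ydot (S * Ydot)) :
    0 ≤ 2 * ((C * (Y * Yᵀ)).trace - fstar A b C) ∧
    2 * ((C * (Y * Yᵀ)).trace - fstar A b C) ≤ Real.sqrt R * εg + R * εH :=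
  approx_socp_approx_optimal_of_p_gt_n_general
    (fun _ ht => hR ▸ le_csSup (hcompact.image continuous_id.matrix_trace).bddAbove ht)
    hY (Y.rank_le_height.trans_lt hpn) hS hεH hgrad hhess

end
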